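/- Let p and q be real numbers with 0 < p and 5p < q, set b₀ = (1/p)·√((q−5p)/(5(q−p))), ξ₀ = (1,0,0) and ξ± = (1, ±b₀, 0). Then EH(ξ₊) = EH(ξ₋) > EH(ξ₀) > 0. (This is the paper's lemma that the two irregular cscS Reeb vector fields ξ± on the join Sasaki manifold over ℙ¹×ℙ¹ have strictly larger Einstein–Hilbert energy than the regular field ξ₀, hence are not detectable by the CR Yamabe energy.) -/

import Mathlib

/-- Product of the values of the affine function `ξ(x,y) = 1 + bx + cy` at the four
vertices `(−p,−q), (−p,q), (p,q), (p,−q)` of the moment rectangle. -/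
def xiProd (p q b c : ℝ) : ℝ :=
  (1 - p * b - q * c) * (1 - p * b + q * c) * (1 + p * b + q * c) * (1 + p * b - q * c)

/-- Total volume `V(ξ) = 4pq/(ξ₁ξ₂ξ₃ξ₄)`. -/
noncomputable def sasakiVol (p q b c : ℝ) : ℝ := 4 * p * q / xiProd p q b c

/-- Total Tanaka–Webster scalar curvature
`S(ξ) = 2q/(ξ₁ξ₂) + 2p/(ξ₂ξ₃) + 2q/(ξ₃ξ₄) + 2p/(ξ₄ξ₁)`. -/
noncomputable def sasakiScal (p q b c : ℝ) : ℝ :=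
  2 * q / ((1 - p * b - q * c) * (1 - p * b + q * c))
  + 2 * p / ((1 - p * b + q * c) * (1 + p * b + q * c))
  + 2 * q / ((1 + p * b + q * c) * (1 + p * b - q * c))
  + 2 * p / ((1 + p * b - q * c) * (1 - p * b - q * c))

/-- Einstein–Hilbert functional `EH(ξ) = S(ξ)/V(ξ)^{2/3}` on the Sasaki–Reeb cone. -/
noncomputable def sasakiEH (p q b c : ℝ) : ℝ :=
  sasakiScal p q b c / (sasakiVol p q b c) ^ ((2 : ℝ) / 3)

/-!
Along the axis `c = 0`, put `t = pb` and `u = 1 - t²`. The `u`-powers in `S` and `V` combine to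
`EH(1, b, 0) = 4 (q + p + (q - p) t²) / ((4pq)^(2/3) u^(2/3))`, and Bernoulli's inequality
`(1 - t²)^(2/3) < 1 - (2/3) t²` makes this larger than its value at `t = 0` as soon as
`-(2/3) (q + p) ≤ q - p`, i.e. `p ≤ 5q`.
-/

/-- The slope `b₀` defining the two irregular Reeb fields `ξ± = (1, ±b₀, 0)`. -/
noncomputable def irregularSlope (p q : ℝ) : ℝ :=
  (1 / p) * Real.sqrt ((q - 5 * p) / (5 * (q - p)))

section Slope

variable {p q : ℝ}

lemma irregularSlope_pos (hp : 0 < p) (hq : 5 * p < q) : 0 < irregularSlope p q :=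
  mul_pos (one_div_pos.2 hp) (Real.sqrt_pos.2 (div_pos (by linarith) (by linarith)))

lemma abs_mul_irregularSlope_lt_one (hp : 0 < p) (hq : 5 * p < q) :
    |p * irregularSlope p q| < 1 := by
  have hden : 0 < 5 * (q - p) := by linarith
  have hratio : (q - 5 * p) / (5 * (q - p)) < 1 := by
    rw [div_lt_one hden]
    linarith
  rw [irregularSlope, ← mul_assoc, mul_one_div_cancel hp.ne', one_mul,
    abs_of_nonneg (Real.sqrt_nonneg _)]
  exact (Real.sqrt_lt' one_pos).2 (by rwa [one_pow])

end Slope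

section Reflection

variable (p q b c : ℝ)

lemma sasakiVol_neg_left : sasakiVol p q (-b) c = sasakiVol p q b c := by
  unfold sasakiVol xiProd
  ring

lemma sasakiScal_neg_left : sasakiScal p q (-b) c = sasakiScal p q b c := by
  unfold sasakiScal
  ring

lemma sasakiEH_neg_left : sasakiEH p q (-b) c = sasakiEH p q b c := by
  rw [sasakiEH, sasakiEH, sasakiScal_neg_left, sasakiVol_neg_left]

end Reflection

section Axis

variable {p q b : ℝ}

lemma sasakiVol_zero_right (p q b : ℝ) :
    sasakiVol p q b 0 = 4 * p * q / (1 - (p * b) ^ 2) ^ 2 := by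
  unfold sasakiVol xiProd
  congr 1
  ring

lemma sasakiScal_zero_right (q : ℝ) (hb : (p * b) ^ 2 ≠ 1) :
    sasakiScal p q b 0 = 4 * (q + p + (q - p) * (p * b) ^ 2) / (1 - (p * b) ^ 2) ^ 2 := by
  have hfactor : 1 - (p * b) ^ 2 = (1 - p * b) * (1 + p * b) := by ring
  obtain ⟨hminus, hplus⟩ : 1 - p * b ≠ 0 ∧ 1 + p * b ≠ 0 :=
    mul_ne_zero_iff.1 (hfactor ▸ sub_ne_zero.2 hb.symm)
  rw [hfactor]
  simp only [sasakiScal, mul_zero, sub_zero, add_zero]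
  field_simp
  ring

lemma sasakiEH_zero_right (hpq : 0 ≤ p * q) (hb : |p * b| < 1) :
    sasakiEH p q b 0 = 4 * (q + p + (q - p) * (p * b) ^ 2) /
      ((4 * p * q) ^ ((2 : ℝ) / 3) * (1 - (p * b) ^ 2) ^ ((2 : ℝ) / 3)) := by
  have hsq : (p * b) ^ 2 < 1 := (sq_lt_one_iff_abs_lt_one _).2 hb
  have hvol : 0 ≤ 4 * p * q := by linarith
  rw [sasakiEH, sasakiScal_zero_right q hsq.ne, sasakiVol_zero_right,
    Real.div_rpow hvol (sq_nonneg _)]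
  set u := 1 - (p * b) ^ 2
  have hu : 0 < u := sub_pos.2 hsq
  have hpow : u ^ 2 = u ^ ((2 : ℝ) / 3) * (u ^ 2) ^ ((2 : ℝ) / 3) := by
    rw [← Real.mul_rpow hu.le (sq_nonneg u), ← pow_succ', ← Real.rpow_natCast_mul hu.le,
      ← Real.rpow_natCast]
    norm_num
  nth_rewrite 1 [hpow]
  field_simp

lemma sasakiEH_zero_zero (hpq : 0 ≤ p * q) :
    sasakiEH p q 0 0 = 4 * (q + p) / (4 * p * q) ^ ((2 : ℝ) / 3) := by
  simp [sasakiEH_zero_right hpq (b := 0)]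

lemma sasakiEH_zero_zero_pos (hp : 0 < p) (hq : 0 < q) : 0 < sasakiEH p q 0 0 := by
  rw [sasakiEH_zero_zero (by positivity)]
  positivity

lemma sasakiEH_zero_zero_lt (hp : 0 < p) (hq : p ≤ 5 * q) (hb : b ≠ 0)
    (hpb : |p * b| < 1) : sasakiEH p q 0 0 < sasakiEH p q b 0 := by
  have hq0 : 0 < q := by linarith
  have hsq : (p * b) ^ 2 < 1 := (sq_lt_one_iff_abs_lt_one _).2 hpb
  have hsq0 : 0 < (p * b) ^ 2 := by positivity
  have hpq : 0 ≤ p * q := by positivity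
  rw [sasakiEH_zero_zero hpq, sasakiEH_zero_right hpq hpb, ← div_div, div_right_comm]
  set s := (p * b) ^ 2
  have hu : 0 < 1 - s := sub_pos.2 hsq
  have bernoulli : (1 - s) ^ ((2 : ℝ) / 3) < 1 - 2 / 3 * s := by
    simpa [← sub_eq_add_neg] using
      rpow_one_add_lt_one_add_mul_self (s := -s) (p := 2 / 3)
        (by linarith) (by linarith) (by norm_num) (by norm_num)
  have hnum : 4 * (q + p) < 4 * (q + p + (q - p) * s) / (1 - s) ^ ((2 : ℝ) / 3) := by
    rw [lt_div_iff₀ (Real.rpow_pos_of_pos hu _)]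
    calc 4 * (q + p) * (1 - s) ^ ((2 : ℝ) / 3)
        < 4 * (q + p) * (1 - 2 / 3 * s) := by gcongr
      _ ≤ 4 * (q + p + (q - p) * s) := by
          nlinarith [mul_nonneg (sub_nonneg.2 hq) hsq0.le]
  gcongr

end Axis

theorem stmt4_general (p q b : ℝ) (hp : 0 < p) (hq : p ≤ 5 * q) (hb : b ≠ 0)
    (hpb : |p * b| < 1) :
    sasakiEH p q b 0 = sasakiEH p q (-b) 0 ∧
    sasakiEH p q 0 0 < sasakiEH p q b 0 ∧
    0 < sasakiEH p q 0 0 :=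
  ⟨(sasakiEH_neg_left p q b 0).symm, sasakiEH_zero_zero_lt hp hq hb hpb,
    sasakiEH_zero_zero_pos hp (by linarith)⟩

/-- for `0 < p`, `5p < q` and `b₀ = (1/p)·√((q−5p)/(5(q−p)))`, the two
irregular cscS Reeb fields `ξ± = (1, ±b₀, 0)` have equal Einstein–Hilbert energy,
strictly larger than that of the regular field `ξ₀ = (1,0,0)`, which is positive:
`EH(ξ₊) = EH(ξ₋) > EH(ξ₀) > 0`. -/
theorem stmt4 (p q : ℝ) (hp : 0 < p) (hq : 5 * p < q)
    (b₀ : ℝ) (hb₀ : b₀ = (1 / p) * Real.sqrt ((q - 5 * p) / (5 * (q - p)))) :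
    sasakiEH p q b₀ 0 = sasakiEH p q (-b₀) 0 ∧
    sasakiEH p q 0 0 < sasakiEH p q b₀ 0 ∧
    0 < sasakiEH p q 0 0 := by
  subst hb₀
  exact stmt4_general p q (irregularSlope p q) hp (by linarith) (irregularSlope_pos hp hq).ne'
    (abs_mul_irregularSlope_lt_one hp hq)
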